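/- Let d ≥ 0 and let ν_0 ≥ ν_1 ≥ … ≥ ν_d ≥ 0 be a decreasing sequence of nonnegative real numbers. Set α_i := (√(i+1) − √i)·√(ν_i) for 0 ≤ i ≤ d. Then Σ_{i=0}^{d} ν_i ≤ ( Σ_{i=0}^{d} α_i )². -/

import Mathlib

open Finset

/-- For a decreasing sequence `ν_0 ≥ ν_1 ≥ … ≥ ν_d ≥ 0` of nonnegative
reals and `α_i = (√(i+1) - √i)·√(ν_i)`, one has `Σ_{i=0}^d ν_i ≤ (Σ_{i=0}^d α_i)²`. -/
theorem stmt11 (d : ℕ) (ν : ℕ → ℝ)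
    (hνdec : ∀ i < d, ν (i + 1) ≤ ν i) (hνnn : ∀ i ≤ d, 0 ≤ ν i) :
    ∑ i ∈ Finset.range (d + 1), ν i ≤
      (∑ i ∈ Finset.range (d + 1),
        (Real.sqrt ((i : ℝ) + 1) - Real.sqrt (i : ℝ)) * Real.sqrt (ν i)) ^ 2 := by
  suffices h : ∑ i ∈ Finset.range (d + 1), ν i ≤
      (∑ i ∈ Finset.range (d + 1),
        (Real.sqrt ((i : ℝ) + 1) - Real.sqrt (i : ℝ)) * Real.sqrt (ν i)) ^ 2 ∧
      Real.sqrt ((d : ℝ) + 1) * Real.sqrt (ν d) ≤ ∑ i ∈ Finset.range (d + 1),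
        (Real.sqrt ((i : ℝ) + 1) - Real.sqrt (i : ℝ)) * Real.sqrt (ν i) from h.1
  induction d with
  | zero => simp [Real.sq_sqrt (hνnn 0 le_rfl)]
  | succ n ih =>
    obtain ⟨h1, h2⟩ := ih (fun i hi => hνdec i (by omega)) (fun i hi => hνnn i (by omega))
    rw [Finset.sum_range_succ _ (n + 1), Finset.sum_range_succ _ (n + 1)]
    push_cast
    set A := ∑ i ∈ Finset.range (n + 1),
        (Real.sqrt ((i : ℝ) + 1) - Real.sqrt (i : ℝ)) * Real.sqrt (ν i)
    have hxy : Real.sqrt (ν (n + 1)) ≤ Real.sqrt (ν n) :=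
      Real.sqrt_le_sqrt (hνdec n (by omega))
    have hx0 := Real.sqrt_nonneg (ν (n + 1))
    have hx2 := Real.sq_sqrt (hνnn (n + 1) le_rfl)
    have hp0 := Real.sqrt_nonneg ((n : ℝ) + 1)
    have hp2 := Real.sq_sqrt (show (0 : ℝ) ≤ (n : ℝ) + 1 by positivity)
    have hq2 := Real.sq_sqrt (show (0 : ℝ) ≤ (n : ℝ) + 1 + 1 by positivity)
    have hpq : Real.sqrt ((n : ℝ) + 1) ≤ Real.sqrt ((n : ℝ) + 1 + 1) :=
      Real.sqrt_le_sqrt (by linarith)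
    set x := Real.sqrt (ν (n + 1))
    set p := Real.sqrt ((n : ℝ) + 1)
    set q := Real.sqrt ((n : ℝ) + 1 + 1)
    have hA : p * x ≤ A := (mul_le_mul_of_nonneg_left hxy hp0).trans h2
    have hc : 0 ≤ (q - p) * x := mul_nonneg (by linarith) hx0
    refine ⟨?_, by linarith⟩
    have h3 := mul_le_mul_of_nonneg_left hA hc
    have h4 : x ^ 2 * (q ^ 2 - p ^ 2) = x ^ 2 := by rw [hp2, hq2]; ring
    nlinarith
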